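/- Let (X,ρ,μ) be a space of homogeneous type with quasi-triangle constant K₀ and doubling constant L, let 0 < q ≤ p < ∞, and let ω be an A₁(X)-weight. Then there exists a positive constant C, depending only on K₀, L, p, and q, such that for every s ∈ (0,1), every R ∈ (0,∞), and every measurable f with ‖f‖_{L^p_ω(X)} < ∞, one has s^{p/q} ∫_X (∫_{X∖B(x,R)} |f(y)|^q/(U(x,y)·ρ(x,y)^{sq}) dμ(y))^{p/q} ω(x) dμ(x) ≤ C·(s·2^{sq}/(R^{sq}(2^{sq}−1)))^{p/q}·[ω]²_{A₁(X)}·‖f‖^p_{L^p_ω(X)}. -/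

import Mathlib

noncomputable section

open MeasureTheory Filter Set
open scoped ENNReal NNReal Topology

namespace Paper

variable {X : Type*} [MeasurableSpace X]

/-- The ball with center `x` and radius `r` for the quasi-metric `ρ`. -/
def ball (ρ : X → X → ℝ) (x : X) (r : ℝ) : Set X := {y | ρ x y < r}

/-- `(X, ρ, μ)` is a quasi-metric measure space with quasi-triangle constant `K₀`:
`ρ` is a quasi-metric with constant `K₀` and all `ρ`-balls are `μ`-measurable. -/
structure IsQuasiMetricMeasure (ρ : X → X → ℝ) (μ : Measure X) (K₀ : ℝ) : Prop where
  nonneg : ∀ x y, 0 ≤ ρ x y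
  eq_zero_iff : ∀ x y, ρ x y = 0 ↔ x = y
  symm : ∀ x y, ρ x y = ρ y x
  one_le : 1 ≤ K₀
  triangle : ∀ x y z, ρ x z ≤ K₀ * (ρ x y + ρ y z)
  measurableSet_ball : ∀ x r, MeasurableSet (ball ρ x r)

/-- The doubling condition for `μ` with doubling constant `L ∈ [1, ∞)`:
`0 < μ(B(x,2r)) ≤ L · μ(B(x,r)) < ∞` for all `x` and `r > 0`. -/
def IsDoubling (ρ : X → X → ℝ) (μ : Measure X) (L : ℝ≥0∞) : Prop :=
  1 ≤ L ∧ L < ∞ ∧ ∀ (x : X) (r : ℝ), 0 < r →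
    0 < μ (ball ρ x r) ∧ μ (ball ρ x (2 * r)) ≤ L * μ (ball ρ x r) ∧ μ (ball ρ x r) < ∞

/-- `U(x,y) := min{μ(B(x,ρ(x,y))), μ(B(y,ρ(x,y)))}`. -/
def U (ρ : X → X → ℝ) (μ : Measure X) (x y : X) : ℝ≥0∞ :=
  min (μ (ball ρ x (ρ x y))) (μ (ball ρ y (ρ x y)))

/-- The `A₁(X)` characteristic of a weight `ω`. -/
def A1Const (ρ : X → X → ℝ) (μ : Measure X) (ω : X → ℝ≥0∞) : ℝ≥0∞ :=
  ⨆ (x : X) (r : ℝ) (_ : 0 < r),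
    ((∫⁻ y in ball ρ x r, ω y ∂μ) / μ (ball ρ x r)) /
      essInf ω (μ.restrict (ball ρ x r))

theorem jensen_aux {Y : Type*} [MeasurableSpace Y] (ν : Measure Y) (g : Y → ℝ≥0∞)
    (hg : Measurable g) (r : ℝ) (hr : 1 ≤ r) :
    (∫⁻ y, g y ∂ν) ^ r ≤ ν univ ^ (r - 1) * ∫⁻ y, g y ^ r ∂ν := by
  rcases hr.eq_or_lt with h | h
  · subst h; simp
  · have hc := Real.HolderConjugate.conjExponent h
    have h1 := ENNReal.lintegral_mul_le_Lp_mul_Lq ν hc hg.aemeasurable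
      (aemeasurable_const (b := (1 : ℝ≥0∞)))
    simp only [Pi.mul_apply, mul_one, ENNReal.one_rpow, lintegral_const, one_mul] at h1
    have hr0 : 0 < r := by linarith
    calc (∫⁻ y, g y ∂ν) ^ r ≤ _ := ENNReal.rpow_le_rpow h1 hr0.le
      _ = _ := by
        rw [ENNReal.mul_rpow_of_nonneg _ _ hr0.le, ← ENNReal.rpow_mul, ← ENNReal.rpow_mul,
          one_div_mul_cancel hr0.ne', ENNReal.rpow_one, mul_comm]
        congr 2
        unfold Real.conjExponent
        have : r - 1 ≠ 0 := by linarith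
        field_simp

theorem sum_aux (a R : ℝ) (ha : 0 < a) (hR : 0 < R) :
    ∑' k : ℕ, (ENNReal.ofReal (2 ^ k * R) ^ a)⁻¹
      = ENNReal.ofReal ((2:ℝ) ^ a / (R ^ a * ((2:ℝ) ^ a - 1))) := by
  have h2 : 1 < (2:ℝ) ^ a := Real.one_lt_rpow (by norm_num) ha
  have hRa : 0 < R ^ a := Real.rpow_pos_of_pos hR a
  have h2i : ((2:ℝ) ^ a)⁻¹ < 1 := inv_lt_one_of_one_lt₀ h2
  have hs : HasSum (fun k : ℕ => (R ^ a)⁻¹ * (((2:ℝ) ^ a)⁻¹) ^ k)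
      ((R ^ a)⁻¹ * (1 - ((2:ℝ) ^ a)⁻¹)⁻¹) :=
    (hasSum_geometric_of_lt_one (by positivity) h2i).mul_left _
  have e : (2:ℝ) ^ a / (R ^ a * ((2:ℝ) ^ a - 1)) = (R ^ a)⁻¹ * (1 - ((2:ℝ) ^ a)⁻¹)⁻¹ := by
    have h3 : (2:ℝ) ^ a - 1 ≠ 0 := by linarith
    have h4 : (2:ℝ) ^ a ≠ 0 := by positivity
    have h5 : 1 - ((2:ℝ) ^ a)⁻¹ = ((2:ℝ) ^ a - 1) / (2:ℝ) ^ a := by field_simp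
    rw [h5]; field_simp
  rw [e, ← hs.tsum_eq, ENNReal.ofReal_tsum_of_nonneg (fun k => by positivity) hs.summable]
  refine tsum_congr fun k => ?_
  rw [ENNReal.ofReal_rpow_of_pos (by positivity), ← ENNReal.ofReal_inv_of_pos (by positivity)]
  congr 1
  rw [Real.mul_rpow (by positivity) hR.le, ← Real.rpow_natCast, ← Real.rpow_mul (by norm_num),
    mul_comm (k : ℝ) a, Real.rpow_mul (by norm_num), Real.rpow_natCast]
  rw [mul_inv, inv_pow, mul_comm]

section aux
variable {Y : Type*} [MeasurableSpace Y] {ρ : Y → Y → ℝ} {μ : Measure Y} {K₀ : ℝ} {L : ℝ≥0∞}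

theorem grow (hL : IsDoubling ρ μ L) (m : ℕ) (x : Y) (r r' : ℝ) (hr : 0 < r)
    (h : r' ≤ 2 ^ m * r) : μ (ball ρ x r') ≤ L ^ m * μ (ball ρ x r) := by
  have key : ∀ n : ℕ, μ (ball ρ x (2 ^ n * r)) ≤ L ^ n * μ (ball ρ x r) := by
    intro n
    induction n with
    | zero => simp
    | succ n ih =>
      calc μ (ball ρ x (2 ^ (n+1) * r)) = μ (ball ρ x (2 * (2 ^ n * r))) := by
            congr 2; ring
        _ ≤ L * μ (ball ρ x (2 ^ n * r)) := (hL.2.2 x _ (by positivity)).2.1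
        _ ≤ L * (L ^ n * μ (ball ρ x r)) := by gcongr
        _ = _ := by ring
  refine le_trans (measure_mono ?_) (key m)
  intro y hy
  exact lt_of_lt_of_le hy h

theorem ball_sub (hρ : IsQuasiMetricMeasure ρ μ K₀) (x y : Y) (a b c : ℝ) (hxy : ρ x y ≤ a)
    (h : K₀ * (a + b) ≤ c) : ball ρ x b ⊆ ball ρ y c := by
  intro z hz
  have h1 := hρ.triangle y x z
  have h2 := hρ.one_le
  have hz : ρ x z < b := hz
  rw [hρ.symm y x] at h1
  change ρ y z < c
  nlinarith

theorem iUnion_ball (x : Y) : ⋃ n : ℕ, ball ρ x ((n : ℝ) + 1) = univ := by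
  ext y
  simp only [mem_iUnion, mem_univ, iff_true]
  obtain ⟨n, hn⟩ := exists_nat_gt (ρ x y)
  exact ⟨n, show ρ x y < _ by linarith⟩

theorem sigmaFinite_aux [Nonempty Y] (hL : IsDoubling ρ μ L) : SigmaFinite μ := by
  obtain ⟨x⟩ := ‹Nonempty Y›
  exact ⟨⟨⟨fun n => ball ρ x ((n : ℝ) + 1), fun _ => trivial,
    fun n => (hL.2.2 x _ (by positivity)).2.2, iUnion_ball x⟩⟩⟩

theorem exists_cover [Nonempty Y] (hρ : IsQuasiMetricMeasure ρ μ K₀) (hL : IsDoubling ρ μ L)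
    (t : ℝ) (ht : 0 < t) : ∃ c : ℕ → Y, ∀ y, ∃ i, ρ (c i) y < t := by
  have hσ := sigmaFinite_aux hL
  have hK := hρ.one_le
  obtain ⟨S, hS⟩ := zorn_subset {S : Set Y | S.Pairwise fun x y => t ≤ ρ x y} (by
    intro c hc hch
    refine ⟨⋃₀ c, ?_, fun s hs => subset_sUnion_of_mem hs⟩
    exact (pairwise_sUnion hch.directedOn).2 fun s hs => hc hs)
  have hcov : ∀ y, ∃ x ∈ S, ρ x y < t := by
    intro y
    by_contra! hcon
    have hyS : y ∉ S := by
      intro hy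
      have := hcon y hy
      rw [(hρ.eq_zero_iff y y).2 rfl] at this
      linarith
    have hins : insert y S ∈ {S : Set Y | S.Pairwise fun x y => t ≤ ρ x y} := by
      refine hS.prop.insert fun b hb _ => ⟨?_, hcon b hb⟩
      rw [hρ.symm]; exact hcon b hb
    exact hyS (hS.le_of_ge hins (subset_insert y S) (mem_insert y S))
  have hcount : S.Countable := by
    have hd : Pairwise (Function.onFun Disjoint fun i : S => ball ρ (i : Y) (t / (2 * K₀))) := by
      intro i j hij
      refine Set.disjoint_left.2 fun z hz1 hz2 => ?_
      have h1 : t ≤ ρ (i : Y) j := hS.prop i.2 j.2 (fun h => hij (Subtype.ext h))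
      have h2 := hρ.triangle i z j
      have hz1 : ρ (i : Y) z < t / (2 * K₀) := hz1
      have hz2 : ρ (j : Y) z < t / (2 * K₀) := hz2
      rw [hρ.symm z j] at h2
      have h3 : K₀ * (ρ (i : Y) z + ρ (j : Y) z) < K₀ * (t / (2 * K₀) + t / (2 * K₀)) :=
        mul_lt_mul_of_pos_left (by linarith) (by linarith)
      have h4 : K₀ * (t / (2 * K₀) + t / (2 * K₀)) = t := by field_simp; norm_num
      linarith
    have := Measure.countable_meas_pos_of_disjoint_iUnion (μ := μ)
      (fun i : S => hρ.measurableSet_ball (i : Y) (t / (2 * K₀))) hd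
    have hu : {i : S | 0 < μ (ball ρ (i : Y) (t / (2 * K₀)))} = univ := by
      ext i
      simp only [mem_setOf_eq, mem_univ, iff_true]
      exact (hL.2.2 i _ (by positivity)).1
    rw [hu] at this
    exact countable_coe_iff.1 (countable_univ_iff.1 this)
  have hne : S.Nonempty := by
    obtain ⟨x, hx, _⟩ := hcov (Classical.arbitrary Y)
    exact ⟨x, hx⟩
  obtain ⟨c, hc⟩ := hcount.exists_eq_range hne
  refine ⟨c, fun y => ?_⟩
  obtain ⟨x, hx, hxy⟩ := hcov y
  rw [hc] at hx
  obtain ⟨i, rfl⟩ := hx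
  exact ⟨i, hxy⟩

theorem essInf_ne_top (hL : IsDoubling ρ μ L) {ω : Y → ℝ≥0∞} (hω : Measurable ω)
    (x : Y) (r : ℝ) (hr : 0 < r) (hloc : (∫⁻ y in ball ρ x r, ω y ∂μ) < ∞) :
    essInf ω (μ.restrict (ball ρ x r)) ≠ ∞ := by
  have h1 := ae_lt_top hω hloc.ne
  have h2 := ae_essInf_le (f := ω) (μ := μ.restrict (ball ρ x r))
  have : NeZero (μ.restrict (ball ρ x r)) :=
    ⟨by simpa using (hL.2.2 x r hr).1.ne'⟩
  obtain ⟨y, hy1, hy2⟩ := (h1.and h2).exists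
  exact (lt_of_le_of_lt hy2 hy1).ne

theorem A1_ae (hρ : IsQuasiMetricMeasure ρ μ K₀) (hL : IsDoubling ρ μ L) {ω : Y → ℝ≥0∞}
    (hω : Measurable ω) (hA : A1Const ρ μ ω < ∞)
    (x : Y) (r : ℝ) (hr : 0 < r) (hloc : (∫⁻ y in ball ρ x r, ω y ∂μ) < ∞) :
    ∀ᵐ y ∂μ, y ∈ ball ρ x r →
      (∫⁻ y in ball ρ x r, ω y ∂μ) / μ (ball ρ x r) ≤ A1Const ρ μ ω * ω y := by
  have h1 : ((∫⁻ y in ball ρ x r, ω y ∂μ) / μ (ball ρ x r)) /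
      essInf ω (μ.restrict (ball ρ x r)) ≤ A1Const ρ μ ω :=
    le_iSup_of_le x (le_iSup_of_le r (le_iSup_of_le hr le_rfl))
  rw [ENNReal.div_le_iff_le_mul (Or.inr hA.ne) (Or.inl (essInf_ne_top hL hω x r hr hloc))] at h1
  have h2 := ae_essInf_le (f := ω) (μ := μ.restrict (ball ρ x r))
  rw [ae_restrict_iff' (hρ.measurableSet_ball x r)] at h2
  filter_upwards [h2] with y hy hyb
  exact h1.trans (by gcongr; exact hy hyb)

theorem A1_le_sq (hL : IsDoubling ρ μ L) {ω : Y → ℝ≥0∞}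
    (hω : Measurable ω)
    (hloc : ∀ (x : Y) (r : ℝ), 0 < r → (∫⁻ y in ball ρ x r, ω y ∂μ) < ∞) :
    A1Const ρ μ ω ≤ A1Const ρ μ ω ^ 2 := by
  by_cases h0 : A1Const ρ μ ω = 0
  · simp [h0]
  suffices h : 1 ≤ A1Const ρ μ ω by
    calc A1Const ρ μ ω = A1Const ρ μ ω * 1 := by simp
      _ ≤ A1Const ρ μ ω * A1Const ρ μ ω := by gcongr
      _ = _ := by ring
  have h0' := h0
  unfold A1Const at h0'
  simp only [ENNReal.iSup_eq_zero, not_forall] at h0'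
  obtain ⟨x, r, hr, hne⟩ := h0'
  refine le_trans ?_ (le_iSup_of_le x (le_iSup_of_le r (le_iSup_of_le hr le_rfl)))
  have het := essInf_ne_top hL hω x r hr (hloc x r hr)
  obtain ⟨hb0, _, hbt⟩ := hL.2.2 x r hr
  have ha0 : (∫⁻ y in ball ρ x r, ω y ∂μ) / μ (ball ρ x r) ≠ 0 := by
    intro h; rw [h] at hne; simp at hne
  rw [ENNReal.le_div_iff_mul_le (Or.inr ha0) (Or.inl het), one_mul,
    ENNReal.le_div_iff_mul_le (Or.inl hb0.ne') (Or.inl hbt.ne)]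
  calc _ = ∫⁻ y in ball ρ x r, essInf ω (μ.restrict (ball ρ x r)) ∂μ := by simp
    _ ≤ _ := lintegral_mono_ae ae_essInf_le

/-- averaging operators are dominated by a measurable function with the right bound -/
theorem avg_bound [Nonempty Y] (hρ : IsQuasiMetricMeasure ρ μ K₀) (hL : IsDoubling ρ μ L)
    {ω : Y → ℝ≥0∞} (hω : Measurable ω)
    (hloc : ∀ (x : Y) (r : ℝ), 0 < r → (∫⁻ y in ball ρ x r, ω y ∂μ) < ∞)
    (hA : A1Const ρ μ ω < ∞) (m : ℕ) (hm : 7 * K₀ ^ 4 ≤ 2 ^ m)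
    (h : Y → ℝ≥0∞) (hh : Measurable h) (t : ℝ) (ht : 0 < t) :
    ∃ H : Y → ℝ≥0∞, Measurable H ∧
      (∀ x, (∫⁻ y in ball ρ x t, h y ∂μ) / μ (ball ρ x t) ≤ L ^ m * H x) ∧
      ∫⁻ x, H x * ω x ∂μ ≤ L ^ m * A1Const ρ μ ω * ∫⁻ y, h y * ω y ∂μ := by
  have hK := hρ.one_le
  have hK2 : 1 ≤ K₀ ^ 2 := one_le_pow₀ hK
  have hK3 : 1 ≤ K₀ ^ 3 := one_le_pow₀ hK
  have hK23 : K₀ ^ 2 ≤ K₀ ^ 3 := pow_le_pow_right₀ hK (by norm_num)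
  have hK34 : K₀ ^ 3 ≤ K₀ ^ 4 := pow_le_pow_right₀ hK (by norm_num)
  have hK12 : K₀ ≤ K₀ ^ 2 := by nlinarith
  have hLt : L ^ m ≠ ∞ := ENNReal.pow_ne_top hL.2.1.ne
  have hL0 : L ^ m ≠ 0 := pow_ne_zero _ (zero_lt_one.trans_le hL.1).ne'
  obtain ⟨c, hc⟩ := exists_cover hρ hL t ht
  let E : ℕ → Set Y := disjointed fun i => ball ρ (c i) t
  have hEm : ∀ i, MeasurableSet (E i) := fun i =>
    MeasurableSet.disjointed (fun i => hρ.measurableSet_ball (c i) t) i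
  have hEs : ∀ i, E i ⊆ ball ρ (c i) t := fun i => disjointed_subset _ i
  have hEd : Pairwise (Function.onFun Disjoint E) := disjoint_disjointed _
  have hEu : ∀ y, ∃ i, y ∈ E i := by
    intro y
    have : y ∈ ⋃ i, E i := by
      rw [show (⋃ i, E i) = ⋃ i, ball ρ (c i) t from iUnion_disjointed]
      exact mem_iUnion.2 (hc y)
    exact mem_iUnion.1 this
  let B : ℕ → Set Y := fun i => ball ρ (c i) (2 * K₀ * t)
  have hBm : ∀ i, MeasurableSet (B i) := fun i => hρ.measurableSet_ball _ _
  have hB : ∀ i, 0 < μ (B i) ∧ μ (B i) < ∞ := fun i =>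
    ⟨(hL.2.2 (c i) (2 * K₀ * t) (by positivity)).1, (hL.2.2 (c i) (2 * K₀ * t) (by positivity)).2.2⟩
  let a : ℕ → ℝ≥0∞ := fun i => (∫⁻ y in B i, h y ∂μ) / μ (B i)
  refine ⟨fun x => ∑' i, (E i).indicator (fun _ => a i) x,
    Measurable.tsum fun i => measurable_const.indicator (hEm i), ?_, ?_⟩
  · intro x
    obtain ⟨i, hi⟩ := hEu x
    have hxi : ρ (c i) x < t := hEs i hi
    have hsub : ball ρ x t ⊆ B i :=
      ball_sub hρ x (c i) t t _ (by rw [hρ.symm]; exact hxi.le) (by linarith)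
    have hmu : μ (B i) ≤ L ^ m * μ (ball ρ x t) := by
      refine le_trans (measure_mono (ball_sub hρ (c i) x t (2 * K₀ * t) (3 * K₀ ^ 2 * t) hxi.le ?_))
        (grow hL m x t _ ht ?_)
      · nlinarith
      · gcongr; linarith
    have hle : a i ≤ ∑' i, (E i).indicator (fun _ => a i) x := by
      refine le_trans ?_ (ENNReal.le_tsum i)
      rw [indicator_of_mem hi]
    obtain ⟨hb0, _, hbt⟩ := hL.2.2 x t ht
    calc (∫⁻ y in ball ρ x t, h y ∂μ) / μ (ball ρ x t)
        ≤ (∫⁻ y in B i, h y ∂μ) / μ (ball ρ x t) := by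
          gcongr
      _ ≤ (∫⁻ y in B i, h y ∂μ) * (L ^ m / μ (B i)) := by
          rw [div_eq_mul_inv]
          gcongr
          rw [ENNReal.le_div_iff_mul_le (Or.inl (hB i).1.ne') (Or.inl (hB i).2.ne), mul_comm,
            ← div_eq_mul_inv]
          exact ENNReal.div_le_of_le_mul hmu
      _ = L ^ m * a i := by simp only [a, div_eq_mul_inv]; ring
      _ ≤ _ := by gcongr
  · have step1 : ∫⁻ x, (∑' i, (E i).indicator (fun _ => a i) x) * ω x ∂μ
        = ∑' i, a i * ∫⁻ x in E i, ω x ∂μ := by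
      simp_rw [← ENNReal.tsum_mul_right]
      rw [lintegral_tsum fun i => ((measurable_const.indicator (hEm i)).fun_mul hω).aemeasurable]
      refine tsum_congr fun i => ?_
      rw [← lintegral_const_mul _ hω, ← lintegral_indicator (hEm i)]
      refine lintegral_congr fun x => ?_
      by_cases hx : x ∈ E i <;> simp [hx]
    have step2 : ∑' i, a i * ∫⁻ x in E i, ω x ∂μ
        = ∫⁻ y, h y * ∑' i, (B i).indicator (fun _ => (∫⁻ x in E i, ω x ∂μ) / μ (B i)) y ∂μ := by
      simp_rw [← ENNReal.tsum_mul_left]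
      rw [lintegral_tsum fun i => (hh.fun_mul (measurable_const.indicator (hBm i))).aemeasurable]
      refine tsum_congr fun i => ?_
      calc a i * ∫⁻ x in E i, ω x ∂μ
          = (∫⁻ y in B i, h y ∂μ) * ((∫⁻ x in E i, ω x ∂μ) / μ (B i)) := by
            simp only [a, div_eq_mul_inv]; ring
        _ = _ := by
            rw [← lintegral_mul_const _ hh, ← lintegral_indicator (hBm i)]
            refine lintegral_congr fun x => ?_
            by_cases hx : x ∈ B i <;> simp [hx]
    rw [step1, step2, ← lintegral_const_mul _ (hh.fun_mul hω)]
    have hae : ∀ᵐ y ∂μ, ∀ j, y ∈ ball ρ (c j) (4 * K₀ ^ 3 * t) →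
      (∫⁻ y in ball ρ (c j) (4 * K₀ ^ 3 * t), ω y ∂μ) / μ (ball ρ (c j) (4 * K₀ ^ 3 * t))
        ≤ A1Const ρ μ ω * ω y := by
      rw [ae_all_iff]
      exact fun j => A1_ae hρ hL hω hA _ _ (by positivity) (hloc _ _ (by positivity))
    refine lintegral_mono_ae ?_
    filter_upwards [hae] with y hy
    obtain ⟨j, hj⟩ := hEu y
    have hyj : ρ (c j) y < t := hEs j hj
    have hy' := hy j (lt_of_lt_of_le hyj (by nlinarith))
    set B' := ball ρ (c j) (4 * K₀ ^ 3 * t) with hB'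
    obtain ⟨hb0, _, hbt⟩ := hL.2.2 (c j) (4 * K₀ ^ 3 * t) (by positivity)
    have hterm : ∀ i, (B i).indicator (fun _ => (∫⁻ x in E i, ω x ∂μ) / μ (B i)) y
        ≤ (L ^ m / μ B') * ∫⁻ x in E i, B'.indicator ω x ∂μ := by
      intro i
      by_cases hi : y ∈ B i
      · rw [indicator_of_mem hi]
        have hi' : ρ (c i) y < 2 * K₀ * t := hi
        have hij : ρ (c i) (c j) ≤ 3 * K₀ ^ 2 * t := by
          have h1 := hρ.triangle (c i) y (c j)
          rw [hρ.symm y (c j)] at h1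
          have h2 : K₀ * (ρ (c i) y + ρ (c j) y) ≤ K₀ * (2 * K₀ * t + t) := by
            gcongr
          nlinarith
        have hEB : E i ⊆ B' := by
          refine (hEs i).trans (ball_sub hρ (c i) (c j) (3 * K₀ ^ 2 * t) t _ hij ?_)
          have : K₀ * t ≤ K₀ ^ 3 * t := by gcongr; linarith
          nlinarith
        have hmu : μ B' ≤ L ^ m * μ (B i) := by
          refine le_trans (measure_mono (ball_sub hρ (c j) (c i) (3 * K₀ ^ 2 * t) _
            (7 * K₀ ^ 4 * t) (by rw [hρ.symm]; exact hij) ?_)) (grow hL m (c i) _ _ (by positivity) ?_)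
          · have : K₀ ^ 3 * t ≤ K₀ ^ 4 * t := by gcongr
            nlinarith
          · have : 1 * t ≤ 2 * K₀ * t := by gcongr; linarith
            calc 7 * K₀ ^ 4 * t ≤ 2 ^ m * (1 * t) := by rw [one_mul]; gcongr
              _ ≤ _ := by gcongr
        have he : ∫⁻ x in E i, B'.indicator ω x ∂μ = ∫⁻ x in E i, ω x ∂μ :=
          setLIntegral_congr_fun (hEm i) fun x hx => indicator_of_mem (hEB hx) ω
        rw [he, mul_comm, div_eq_mul_inv]
        gcongr
        rw [ENNReal.le_div_iff_mul_le (Or.inl hb0.ne') (Or.inl hbt.ne), mul_comm,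
            ← div_eq_mul_inv]
        exact ENNReal.div_le_of_le_mul hmu
      · rw [indicator_of_notMem hi]; exact zero_le
    have hsum : ∑' i, (B i).indicator (fun _ => (∫⁻ x in E i, ω x ∂μ) / μ (B i)) y
        ≤ L ^ m * (A1Const ρ μ ω * ω y) := by
      calc _ ≤ ∑' i, (L ^ m / μ B') * ∫⁻ x in E i, B'.indicator ω x ∂μ := ENNReal.tsum_le_tsum hterm
        _ = (L ^ m / μ B') * ∫⁻ x in ⋃ i, E i, B'.indicator ω x ∂μ := by
          rw [ENNReal.tsum_mul_left, lintegral_iUnion hEm hEd]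
        _ ≤ (L ^ m / μ B') * ∫⁻ x, B'.indicator ω x ∂μ := by
          gcongr
          exact Measure.restrict_le_self
        _ = L ^ m * ((∫⁻ x in B', ω x ∂μ) / μ B') := by
          rw [lintegral_indicator (hρ.measurableSet_ball _ _)]
          simp only [div_eq_mul_inv]; ring
        _ ≤ _ := by gcongr
    calc _ ≤ h y * (L ^ m * (A1Const ρ μ ω * ω y)) := by gcongr
      _ = _ := by ring

theorem U_bound (hρ : IsQuasiMetricMeasure ρ μ K₀) (hL : IsDoubling ρ μ L)
    (m : ℕ) (hm : 7 * K₀ ^ 4 ≤ 2 ^ m) (x y : Y) (r : ℝ) (hr : 0 < r) (h1 : r ≤ ρ x y) :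
    μ (ball ρ x (2 * r)) ≤ L ^ m * U ρ μ x y := by
  have hK := hρ.one_le
  have hK4 : K₀ ≤ K₀ ^ 4 := le_self_pow₀ hK (by norm_num)
  have h0 : 0 < ρ x y := by linarith
  unfold U
  rcases min_choice (μ (ball ρ x (ρ x y))) (μ (ball ρ y (ρ x y))) with h | h <;> rw [h]
  · refine grow hL m x _ _ h0 ?_
    nlinarith
  · refine le_trans (measure_mono (ball_sub hρ x y (ρ x y) _ (3 * K₀ * ρ x y) le_rfl ?_))
      (grow hL m y _ _ h0 ?_)
    · nlinarith
    · gcongr; linarith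

theorem kernel_bound (hρ : IsQuasiMetricMeasure ρ μ K₀) (hL : IsDoubling ρ μ L)
    (m : ℕ) (hm : 7 * K₀ ^ 4 ≤ 2 ^ m) (x : Y) (R a : ℝ) (hR : 0 < R) (ha : 0 < a)
    (g : Y → ℝ≥0∞) (hg : Measurable g) :
    ∫⁻ y in (ball ρ x R)ᶜ, g y / (U ρ μ x y * ENNReal.ofReal (ρ x y) ^ a) ∂μ ≤
      L ^ m * ∑' k : ℕ, (ENNReal.ofReal (2 ^ k * R) ^ a)⁻¹ *
        ((∫⁻ y in ball ρ x (2 * (2 ^ k * R)), g y ∂μ) / μ (ball ρ x (2 * (2 ^ k * R)))) := by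
  set b : ℕ → ℝ≥0∞ := fun k => L ^ m * ((ENNReal.ofReal (2 ^ k * R) ^ a)⁻¹ /
    μ (ball ρ x (2 * (2 ^ k * R)))) with hb
  have hrhs : L ^ m * ∑' k : ℕ, (ENNReal.ofReal (2 ^ k * R) ^ a)⁻¹ *
        ((∫⁻ y in ball ρ x (2 * (2 ^ k * R)), g y ∂μ) / μ (ball ρ x (2 * (2 ^ k * R))))
      = ∫⁻ y, ∑' k, (ball ρ x (2 * (2 ^ k * R))).indicator (fun y => b k * g y) y ∂μ := by
    rw [lintegral_tsum fun k => ((hg.const_mul _).indicator (hρ.measurableSet_ball _ _)).aemeasurable,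
      ← ENNReal.tsum_mul_left]
    refine tsum_congr fun k => ?_
    rw [lintegral_indicator (hρ.measurableSet_ball _ _), lintegral_const_mul _ hg]
    simp only [hb, div_eq_mul_inv]; ring
  rw [hrhs, ← lintegral_indicator (hρ.measurableSet_ball x R).compl]
  refine lintegral_mono fun y => ?_
  by_cases hy : y ∈ (ball ρ x R)ᶜ
  · rw [indicator_of_mem hy]
    have hy' : R ≤ ρ x y := not_lt.1 hy
    obtain ⟨k, hk1, hk2⟩ := exists_nat_pow_near (x := ρ x y / R) (y := 2)
      ((one_le_div hR).2 hy') (by norm_num)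
    rw [le_div_iff₀ hR] at hk1
    rw [div_lt_iff₀ hR] at hk2
    have hyk : y ∈ ball ρ x (2 * (2 ^ k * R)) := by
      change ρ x y < _
      rw [pow_succ] at hk2; linarith
    refine le_trans ?_ (ENNReal.le_tsum k)
    rw [indicator_of_mem hyk, div_eq_mul_inv, mul_comm]
    gcongr
    have hU := U_bound hρ hL m hm x y (2 ^ k * R) (by positivity) hk1
    obtain ⟨hb0, _, hbt⟩ := hL.2.2 x (2 * (2 ^ k * R)) (by positivity)
    have hLt : L ^ m ≠ ∞ := ENNReal.pow_ne_top hL.2.1.ne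
    have hU0 : U ρ μ x y ≠ 0 := by
      intro h; rw [h, mul_zero] at hU; exact hb0.ne' (le_antisymm hU zero_le)
    have hp0 : ENNReal.ofReal (ρ x y) ^ a ≠ 0 := by
      have : 0 < ENNReal.ofReal (ρ x y) := ENNReal.ofReal_pos.2 (by linarith)
      exact (ENNReal.rpow_pos this ENNReal.ofReal_ne_top).ne'
    rw [ENNReal.mul_inv (Or.inl hU0) (Or.inr hp0)]
    have e : b k = (L ^ m / μ (ball ρ x (2 * (2 ^ k * R)))) *
        (ENNReal.ofReal (2 ^ k * R) ^ a)⁻¹ := by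
      simp only [hb, div_eq_mul_inv]; ring
    rw [e]
    gcongr
    rw [ENNReal.le_div_iff_mul_le (Or.inl hb0.ne') (Or.inl hbt.ne), mul_comm, ← div_eq_mul_inv]
    exact ENNReal.div_le_of_le_mul hU
  · rw [indicator_of_notMem hy]; exact zero_le

theorem jensen_kernel (hρ : IsQuasiMetricMeasure ρ μ K₀) (hL : IsDoubling ρ μ L)
    (x : Y) (g : Y → ℝ≥0∞) (hg : Measurable g) (r : ℝ) (hr : 1 ≤ r)
    (c : ℕ → ℝ≥0∞) (t : ℕ → ℝ) (ht : ∀ k, 0 < t k) :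
    (∑' k, c k * ((∫⁻ y in ball ρ x (t k), g y ∂μ) / μ (ball ρ x (t k)))) ^ r ≤
      (∑' k, c k) ^ (r - 1) *
      ∑' k, c k * ((∫⁻ y in ball ρ x (t k), g y ^ r ∂μ) / μ (ball ρ x (t k))) := by
  let ν : Measure Y := Measure.sum fun k =>
    (c k / μ (ball ρ x (t k))) • μ.restrict (ball ρ x (t k))
  have h1 : ∀ g : Y → ℝ≥0∞, ∫⁻ y, g y ∂ν =
      ∑' k, c k * ((∫⁻ y in ball ρ x (t k), g y ∂μ) / μ (ball ρ x (t k))) := by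
    intro g
    simp only [ν]
    rw [lintegral_sum_measure]
    refine tsum_congr fun k => ?_
    rw [lintegral_smul_measure, smul_eq_mul]
    simp only [div_eq_mul_inv]; ring
  have h2 : ν univ = ∑' k, c k := by
    simp only [ν]
    rw [Measure.sum_apply _ MeasurableSet.univ]
    refine tsum_congr fun k => ?_
    obtain ⟨hb0, _, hbt⟩ := hL.2.2 x (t k) (ht k)
    simp [ENNReal.div_mul_cancel hb0.ne' hbt.ne]
  rw [← h1, ← h1, ← h2]
  exact jensen_aux ν g hg r hr

end aux

theorem statement2 (K₀ : ℝ) (L : ℝ≥0∞) (p q : ℝ) (hq : 0 < q) (hqp : q ≤ p) :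
    ∃ C : ℝ≥0, 0 < C ∧
      ∀ (Y : Type*) [MeasurableSpace Y] [Nonempty Y] (ρ : Y → Y → ℝ) (μ : Measure Y),
        IsQuasiMetricMeasure ρ μ K₀ → IsDoubling ρ μ L →
        ∀ ω : Y → ℝ≥0∞, Measurable ω →
        (∀ (x : Y) (r : ℝ), 0 < r → (∫⁻ y in ball ρ x r, ω y ∂μ) < ∞) →
        A1Const ρ μ ω < ∞ →
        ∀ s R : ℝ, s ∈ Set.Ioo (0:ℝ) 1 → 0 < R →
        ∀ f : Y → ℝ, Measurable f →
          (∫⁻ x, ENNReal.ofReal |f x| ^ p * ω x ∂μ) < ∞ →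
        ENNReal.ofReal s ^ (p / q) *
            (∫⁻ x, (∫⁻ y in (ball ρ x R)ᶜ, ENNReal.ofReal |f y| ^ q /
                (U ρ μ x y * ENNReal.ofReal (ρ x y) ^ (s * q)) ∂μ) ^ (p / q) * ω x ∂μ) ≤
          (C : ℝ≥0∞) *
            ENNReal.ofReal (s * (2:ℝ) ^ (s * q) / (R ^ (s * q) * ((2:ℝ) ^ (s * q) - 1)))
              ^ (p / q) *
            A1Const ρ μ ω ^ 2 * (∫⁻ x, ENNReal.ofReal |f x| ^ p * ω x ∂μ) := by
  obtain ⟨m, hm⟩ := pow_unbounded_of_one_lt (7 * K₀ ^ 4) (one_lt_two : (1:ℝ) < 2)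
  have hr : 1 ≤ p / q := (one_le_div hq).2 hqp
  set r := p / q with hrdef
  have hr0 : 0 < r := by linarith
  refine ⟨((L ^ m) ^ r * L ^ m * L ^ m).toNNReal + 1, by positivity, ?_⟩
  intro Y _ _ ρ μ hρ hL ω hω hloc hA s R hs hR f hf _
  have hLt : L ^ m ≠ ∞ := ENNReal.pow_ne_top hL.2.1.ne
  have hLr : (L ^ m) ^ r ≠ ∞ := ENNReal.rpow_ne_top_of_nonneg hr0.le hLt
  have hC : (L ^ m) ^ r * L ^ m * L ^ m ≤
      ((((L ^ m) ^ r * L ^ m * L ^ m).toNNReal + 1 : ℝ≥0) : ℝ≥0∞) := by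
    rw [ENNReal.coe_add, ENNReal.coe_toNNReal (ENNReal.mul_ne_top (ENNReal.mul_ne_top hLr hLt) hLt)]
    exact le_self_add
  have ha : 0 < s * q := mul_pos hs.1 hq
  set a := s * q with hadef
  let g : Y → ℝ≥0∞ := fun y => ENNReal.ofReal |f y| ^ q
  have hg : Measurable g := (hf.abs.ennreal_ofReal).pow_const q
  let h : Y → ℝ≥0∞ := fun y => ENNReal.ofReal |f y| ^ p
  have hh : Measurable h := (hf.abs.ennreal_ofReal).pow_const p
  have hgh : ∀ y, g y ^ r = h y := by
    intro y
    simp only [g, h]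
    rw [← ENNReal.rpow_mul, hrdef, mul_div_cancel₀ _ hq.ne']
  let c : ℕ → ℝ≥0∞ := fun k => (ENNReal.ofReal (2 ^ k * R) ^ a)⁻¹
  have hA' : ∑' k, c k = ENNReal.ofReal ((2:ℝ) ^ a / (R ^ a * ((2:ℝ) ^ a - 1))) :=
    sum_aux a R ha hR
  set A := ∑' k, c k with hAdef
  choose H hHm hH1 hH2 using fun k : ℕ => avg_bound hρ hL hω hloc hA m hm.le h hh
    (2 * (2 ^ k * R)) (by positivity)
  have hpt : ∀ x, (∫⁻ y in (ball ρ x R)ᶜ, ENNReal.ofReal |f y| ^ q /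
      (U ρ μ x y * ENNReal.ofReal (ρ x y) ^ a) ∂μ) ^ r ≤
      (L ^ m) ^ r * L ^ m * A ^ (r - 1) * ∑' k, c k * H k x := by
    intro x
    calc _ ≤ (L ^ m * ∑' k : ℕ, c k *
        ((∫⁻ y in ball ρ x (2 * (2 ^ k * R)), g y ∂μ) / μ (ball ρ x (2 * (2 ^ k * R))))) ^ r :=
          ENNReal.rpow_le_rpow (kernel_bound hρ hL m hm.le x R a hR ha g hg) hr0.le
      _ = (L ^ m) ^ r * (∑' k : ℕ, c k *
        ((∫⁻ y in ball ρ x (2 * (2 ^ k * R)), g y ∂μ) / μ (ball ρ x (2 * (2 ^ k * R))))) ^ r :=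
          ENNReal.mul_rpow_of_nonneg _ _ hr0.le
      _ ≤ (L ^ m) ^ r * (A ^ (r - 1) * ∑' k, c k *
        ((∫⁻ y in ball ρ x (2 * (2 ^ k * R)), g y ^ r ∂μ) / μ (ball ρ x (2 * (2 ^ k * R))))) := by
          gcongr
          exact jensen_kernel hρ hL x g hg r hr c (fun k => 2 * (2 ^ k * R))
            (fun k => by positivity)
      _ ≤ (L ^ m) ^ r * (A ^ (r - 1) * ∑' k, c k * (L ^ m * H k x)) := by
          gcongr with k
          simp_rw [hgh]
          exact hH1 k x
      _ = _ := by
          have : ∑' k, c k * (L ^ m * H k x) = L ^ m * ∑' k, c k * H k x := by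
            rw [← ENNReal.tsum_mul_left]
            exact tsum_congr fun k => by ring
          rw [this]; ring
  have hint : ∫⁻ x, (∑' k, c k * H k x) * ω x ∂μ ≤
      A * (L ^ m * A1Const ρ μ ω * ∫⁻ y, h y * ω y ∂μ) := by
    simp_rw [← ENNReal.tsum_mul_right]
    rw [lintegral_tsum fun k => (((hHm k).const_mul _).fun_mul hω).aemeasurable, hAdef,
      ← ENNReal.tsum_mul_right]
    refine ENNReal.tsum_le_tsum fun k => ?_
    simp_rw [mul_assoc (c k)]
    rw [lintegral_const_mul _ ((hHm k).fun_mul hω)]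
    gcongr
    exact hH2 k
  have hSm : Measurable fun x => (∑' k, c k * H k x) * ω x :=
    (Measurable.tsum fun k => (hHm k).const_mul _).mul hω
  have hAr : A ^ (r - 1) * A = A ^ r := by
    have hAt : A ≠ ∞ := by rw [hA']; exact ENNReal.ofReal_ne_top
    have hA0 : A ≠ 0 := by
      rw [hA']
      have h2 : 1 < (2:ℝ) ^ a := Real.one_lt_rpow (by norm_num) ha
      have : 0 < (2:ℝ) ^ a - 1 := by linarith
      exact (ENNReal.ofReal_pos.2 (by positivity)).ne'
    conv_lhs => rw [← ENNReal.rpow_one A, ← ENNReal.rpow_mul, one_mul]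
    rw [← ENNReal.rpow_add _ _ hA0 hAt]
    congr 1; ring
  have hsA : ENNReal.ofReal (s * (2:ℝ) ^ a / (R ^ a * ((2:ℝ) ^ a - 1))) = ENNReal.ofReal s * A := by
    rw [hA', ← ENNReal.ofReal_mul hs.1.le, mul_div_assoc]
  calc _ ≤ ENNReal.ofReal s ^ r * ∫⁻ x, ((L ^ m) ^ r * L ^ m * A ^ (r - 1)) *
        ((∑' k, c k * H k x) * ω x) ∂μ := by
        refine mul_le_mul_right (lintegral_mono fun x => ?_) _
        rw [← mul_assoc]
        refine mul_le_mul_left ?_ _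
        exact hpt x
    _ ≤ ENNReal.ofReal s ^ r * (((L ^ m) ^ r * L ^ m * A ^ (r - 1)) *
        (A * (L ^ m * A1Const ρ μ ω * ∫⁻ y, h y * ω y ∂μ))) := by
        rw [lintegral_const_mul _ hSm]
        gcongr
    _ = ((L ^ m) ^ r * L ^ m * L ^ m) * (ENNReal.ofReal s ^ r * (A ^ (r - 1) * A)) *
        A1Const ρ μ ω * ∫⁻ y, h y * ω y ∂μ := by ring
    _ ≤ _ := by
        rw [hAr, ← ENNReal.mul_rpow_of_nonneg _ _ hr0.le, hsA]
        gcongr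
        exact A1_le_sq hL hω hloc
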